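/- For all integers k ≥ 0 and p ≥ 1 with log_e^{(k)} p ≥ 1, there exists a (k,p)-tree T with Tran(T) ≤ (10 · log_e^{(k)} p)^p; equivalently, the minimum f_k(p) of Tran(T) over all (k,p)-trees T satisfies f_k(p)^{1/p} ≤ 10 · log_e^{(k)} p. -/

import Mathlib

/-- A rooted plane tree: every node carries the (ordered, finite) list of its children. -/
inductive PTree : Type where
  | node : List PTree → PTree

mutual
/-- The number of leaves of a rooted plane tree (a node with no children is a leaf). -/
def PTree.numLeaves : PTree → ℕ
  | .node [] => 1
  | .node (t :: ts) => PTree.numLeavesList (t :: ts)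

/-- The total number of leaves of the trees in a list. -/
def PTree.numLeavesList : List PTree → ℕ
  | [] => 0
  | t :: ts => t.numLeaves + PTree.numLeavesList ts
end

mutual
/-- `Tran(T) = ∏_{u a node of T} (number of children of u)!`. -/
def PTree.tran : PTree → ℕ
  | .node ts => ts.length.factorial * PTree.tranList ts

/-- The product of `Tran` over a list of trees. -/
def PTree.tranList : List PTree → ℕ
  | [] => 1
  | t :: ts => t.tran * PTree.tranList ts
end

/-- `UniformDepth d T` holds iff every root-to-leaf path of `T` has exactly `d` edges. -/
inductive PTree.UniformDepth : ℕ → PTree → Prop where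
  | leaf : PTree.UniformDepth 0 (.node [])
  | node (ts : List PTree) (d : ℕ) (hne : ts ≠ []) (h : ∀ t ∈ ts, PTree.UniformDepth d t) :
      PTree.UniformDepth (d + 1) (.node ts)

/-- The `k`-fold iterated natural logarithm, `log^{(0)} x = x`. -/
noncomputable def iterLog (k : ℕ) (x : ℝ) : ℝ := Real.log^[k] x

/-- `log* x`: the smallest `k ≥ 0` such that `log^{(k)} x ≤ 1`. -/
noncomputable def logStar (x : ℝ) : ℕ := sInf {k : ℕ | iterLog k x ≤ 1}

/-!
The tree is built upwards from its leaves, one level at a time. Call a list of trees a forest.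
Cutting a forest of `n` trees into groups of at most `m` and giving each group a common parent
leaves about `n / m` trees and, since `c! ≤ m ^ (c - 1)` for `1 ≤ c ≤ m`, multiplies `Tran` by at
most `m ^ (n - n / m)`.

By induction on `k`, a forest of `n ≤ exp^[k] x` trees can be completed by `k + 1` further levels to
a tree at the cost of a factor `(10 x) ^ n`: if `n > 10 x`, group with `m = ⌊3 x⌋` and apply the
induction hypothesis to the `q ≈ n / m` groups with `exp x` in place of `x`. The total cost is
`(10 exp x / m) ^ q * m ^ n`, where `m ^ n ≤ (3 x) ^ n`, and the first factor is at most
`(10 / 3) ^ n` because `q ≲ n / 3` and `q x ≲ n / 2`.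
-/

theorem factorial_mul_le_pow {c m : ℕ} (hc : 1 ≤ c) (hcm : c ≤ m) : c.factorial * m ≤ m ^ c := by
  obtain ⟨j, rfl⟩ : ∃ j, c = j + 1 := ⟨c - 1, by lia⟩
  calc (j + 1).factorial * m = (j + 1).descFactorial j * m := by
        rw [← Nat.descFactorial_self, Nat.descFactorial_succ, Nat.add_sub_cancel_left, one_mul]
    _ ≤ (j + 1) ^ j * m := by gcongr; exact Nat.descFactorial_le_pow _ _
    _ ≤ m ^ j * m := by gcongr
    _ = m ^ (j + 1) := (pow_succ m j).symm

theorem exists_flatten_eq_forall_length_le {α : Type*} {m : ℕ} (hm : 0 < m) (l : List α) :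
    ∃ L : List (List α), L.flatten = l ∧ L.length * m < l.length + m ∧
      ∀ c ∈ L, c ≠ [] ∧ c.length ≤ m := by
  rcases le_total l.length m with hlm | hml
  · rcases eq_or_ne l [] with rfl | hl
    · exact ⟨[], by simp [hm]⟩
    · exact ⟨[l], by simp, by simpa using List.length_pos_iff.2 hl, by simp [hl, hlm]⟩
  · have hdrop : (l.drop m).length + m = l.length := by
      rw [List.length_drop, Nat.sub_add_cancel hml]
    obtain ⟨L, hflat, hlen, hL⟩ := exists_flatten_eq_forall_length_le hm (l.drop m)
    have htake : (l.take m).length = m := List.length_take_of_le hml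
    have hne : l.take m ≠ [] := List.length_pos_iff.1 (htake.symm ▸ hm)
    refine ⟨l.take m :: L, by simp [hflat], ?_, List.forall_mem_cons.2 ⟨⟨hne, htake.le⟩, hL⟩⟩
    rw [List.length_cons, add_one_mul]
    lia
termination_by l.length

namespace PTree

theorem numLeavesList_append (ss ts : List PTree) :
    numLeavesList (ss ++ ts) = numLeavesList ss + numLeavesList ts := by
  induction ss with
  | nil => simp [numLeavesList]
  | cons s ss ih => simp [numLeavesList, ih, add_assoc]

theorem tranList_append (ss ts : List PTree) :
    tranList (ss ++ ts) = tranList ss * tranList ts := by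
  induction ss with
  | nil => simp [tranList]
  | cons s ss ih => simp [tranList, ih, mul_assoc]

theorem numLeaves_node {ts : List PTree} (hts : ts ≠ []) :
    (node ts).numLeaves = numLeavesList ts := by
  cases ts with
  | nil => contradiction
  | cons t ts => rw [numLeaves]

theorem numLeavesList_replicate_leaf (p : ℕ) :
    numLeavesList (List.replicate p (node [])) = p := by
  induction p with
  | zero => rfl
  | succ p ih => rw [List.replicate_succ, numLeavesList, ih, numLeaves, add_comm]

theorem tranList_replicate_leaf (p : ℕ) : tranList (List.replicate p (node [])) = 1 := by
  induction p with
  | zero => rfl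
  | succ p ih => simp [List.replicate_succ, tranList, tran, ih]

theorem numLeavesList_map_node {L : List (List PTree)} (hL : ∀ ts ∈ L, ts ≠ []) :
    numLeavesList (L.map node) = numLeavesList L.flatten := by
  induction L with
  | nil => rfl
  | cons ts L ih =>
    obtain ⟨hts, hL⟩ := List.forall_mem_cons.1 hL
    rw [List.map_cons, List.flatten_cons, numLeavesList_append, numLeavesList, numLeaves_node hts,
      ih hL]

theorem tranList_map_node_mul_pow_le {m : ℕ} {L : List (List PTree)}
    (hL : ∀ ts ∈ L, ts ≠ [] ∧ ts.length ≤ m) :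
    tranList (L.map node) * m ^ L.length ≤ tranList L.flatten * m ^ L.flatten.length := by
  induction L with
  | nil => rfl
  | cons ts L ih =>
    obtain ⟨⟨hts, hlen⟩, hL⟩ := List.forall_mem_cons.1 hL
    simp only [List.map_cons, List.flatten_cons, List.length_cons, List.length_append,
      tranList_append, tranList, tran]
    calc ts.length.factorial * tranList ts * tranList (L.map node) * m ^ (L.length + 1)
        = tranList ts * (ts.length.factorial * m) * (tranList (L.map node) * m ^ L.length) := by
          ring
      _ ≤ tranList ts * m ^ ts.length * (tranList L.flatten * m ^ L.flatten.length) := by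
          gcongr tranList ts * ?_ * ?_
          · exact factorial_mul_le_pow (List.length_pos_iff.2 hts) hlen
          · exact ih hL
      _ = tranList ts * tranList L.flatten * m ^ (ts.length + L.flatten.length) := by ring

theorem exists_forest_grouping {m d : ℕ} (hm : 0 < m) {ts : List PTree} (hne : ts ≠ [])
    (hts : ∀ t ∈ ts, UniformDepth d t) :
    ∃ us : List PTree, us ≠ [] ∧ (∀ u ∈ us, UniformDepth (d + 1) u) ∧
      numLeavesList us = numLeavesList ts ∧ us.length * m < ts.length + m ∧
      tranList us * m ^ us.length ≤ tranList ts * m ^ ts.length := by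
  obtain ⟨L, rfl, hlen, hL⟩ := exists_flatten_eq_forall_length_le hm ts
  refine ⟨L.map node, ?_, ?_, numLeavesList_map_node fun c hc ↦ (hL c hc).1, ?_, ?_⟩
  · intro hnil
    simp [List.map_eq_nil_iff.1 hnil] at hne
  · intro u hu
    obtain ⟨c, hc, rfl⟩ := List.mem_map.1 hu
    exact .node c d (hL c hc).1 fun t ht ↦ hts t (List.mem_flatten_of_mem hc ht)
  · rwa [List.length_map]
  · rw [List.length_map]
    exact tranList_map_node_mul_pow_le hL

theorem exists_uniformDepth_tran_eq_factorial {d : ℕ} {ts : List PTree} (hne : ts ≠ [])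
    (hts : ∀ t ∈ ts, UniformDepth d t) (k : ℕ) :
    ∃ T : PTree, T.UniformDepth (d + k + 1) ∧ T.numLeaves = numLeavesList ts ∧
      T.tran = ts.length.factorial * tranList ts := by
  induction k with
  | zero => exact ⟨node ts, .node ts d hne hts, numLeaves_node hne, rfl⟩
  | succ k ih =>
    obtain ⟨T, hdepth, hleaves, htran⟩ := ih
    have hdepth' : (node [T]).UniformDepth (d + (k + 1) + 1) :=
      .node [T] _ (List.cons_ne_nil T []) (List.forall_mem_singleton.2 hdepth)
    refine ⟨node [T], hdepth', ?_, ?_⟩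
    · simp [numLeaves, numLeavesList, hleaves]
    · simp [tran, tranList, htran]

end PTree

section Estimates

open Real

theorem seven_sixths_le_log_ten_thirds : (7 / 6 : ℝ) ≤ log (10 / 3) := by
  have hlog : log (10 / 3) = log 2 + log 5 - log 3 := by
    rw [← log_mul (by norm_num) (by norm_num), ← log_div (by norm_num) (by norm_num)]
    norm_num
  linarith [log_two_gt_d9, log_five_gt_d9, log_three_lt_d9]

theorem ten_thirds_mul_exp_pow_le {x : ℝ} {m n q : ℕ} (hm : 3 ≤ m) (hxm : 2 * x ≤ m)
    (hmx : m ≤ 3 * x) (hxn : 10 * x ≤ n) (hq : q * m ≤ n + m) :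
    (10 / 3 * exp x) ^ q ≤ (10 / 3 : ℝ) ^ n := by
  have hm : (3 : ℝ) ≤ m := by exact_mod_cast hm
  have hq : (q : ℝ) * m ≤ n + m := by exact_mod_cast hq
  have hqm_le : (q : ℝ) * m ≤ 13 / 10 * n := by linarith
  have hq_le : (q : ℝ) ≤ 13 / 30 * n := by
    linarith [hqm_le, mul_le_mul_of_nonneg_left hm q.cast_nonneg]
  have hqx_le : (q : ℝ) * x ≤ 13 / 20 * n := by
    linarith [hqm_le, mul_le_mul_of_nonneg_left hxm q.cast_nonneg]
  have hL := seven_sixths_le_log_ten_thirds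
  rw [← log_le_log_iff (by positivity) (by positivity), log_pow, log_pow,
    log_mul (by norm_num) (exp_ne_zero x), log_exp]
  calc q * (log (10 / 3) + x) = q * log (10 / 3) + q * x := by ring
    _ ≤ 13 / 30 * n * log (10 / 3) + 13 / 20 * n := by gcongr
    _ ≤ n * log (10 / 3) := by linarith [mul_le_mul_of_nonneg_left hL n.cast_nonneg]

theorem ten_mul_exp_pow_mul_pow_le {x : ℝ} {m n q : ℕ} (hm : 3 ≤ m) (hxm : 2 * x ≤ m)
    (hmx : m ≤ 3 * x) (hxn : 10 * x ≤ n) (hq : q * m ≤ n + m) :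
    (10 * exp x) ^ q * (m : ℝ) ^ n ≤ (10 * x) ^ n * (m : ℝ) ^ q := by
  have hm' : (3 : ℝ) ≤ m := by exact_mod_cast hm
  calc (10 * exp x) ^ q * (m : ℝ) ^ n ≤ (10 / 3 * m * exp x) ^ q * (3 * x) ^ n := by
        gcongr
        linarith
    _ = (10 / 3 * exp x) ^ q * (m : ℝ) ^ q * (3 * x) ^ n := by rw [← mul_pow, mul_right_comm]
    _ ≤ (10 / 3) ^ n * (m : ℝ) ^ q * (3 * x) ^ n := by
        have : 0 ≤ x := by linarith
        gcongr
        exact ten_thirds_mul_exp_pow_le hm hxm hmx hxn hq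
    _ = (10 / 3 * (3 * x)) ^ n * (m : ℝ) ^ q := by rw [mul_pow (10 / 3)]; ring
    _ = (10 * x) ^ n * (m : ℝ) ^ q := by ring_nf

theorem le_iterate_exp_iterLog (k : ℕ) (x : ℝ) : x ≤ exp^[k] (iterLog k x) := by
  induction k generalizing x with
  | zero => exact le_rfl
  | succ k ih =>
    calc x ≤ exp (log x) := le_exp_log x
      _ ≤ exp (exp^[k] (iterLog k (log x))) := exp_le_exp.2 (ih (log x))
      _ = exp^[k + 1] (iterLog (k + 1) x) := (Function.iterate_succ_apply' exp k _).symm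

end Estimates

namespace PTree

theorem exists_uniformDepth_tran_le_of_length_le {d : ℕ} {ts : List PTree} (hne : ts ≠ [])
    (hts : ∀ t ∈ ts, UniformDepth d t) (k : ℕ) {y : ℝ} (hy : ts.length ≤ y) :
    ∃ T : PTree, T.UniformDepth (d + k + 1) ∧ T.numLeaves = numLeavesList ts ∧
      (T.tran : ℝ) ≤ tranList ts * y ^ ts.length := by
  obtain ⟨T, hdepth, hleaves, htran⟩ := exists_uniformDepth_tran_eq_factorial hne hts k
  refine ⟨T, hdepth, hleaves, ?_⟩
  calc (T.tran : ℝ) = tranList ts * ts.length.factorial := by rw [htran]; push_cast; ring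
    _ ≤ tranList ts * (ts.length : ℝ) ^ ts.length := by
        gcongr
        exact_mod_cast Nat.factorial_le_pow ts.length
    _ ≤ tranList ts * y ^ ts.length := by gcongr

theorem exists_forest_grouping_ten_mul_exp {d : ℕ} {ts : List PTree} (hne : ts ≠ [])
    (hts : ∀ t ∈ ts, UniformDepth d t) {x : ℝ} (hx : 1 ≤ x) (hxn : 10 * x ≤ ts.length) :
    ∃ us : List PTree, us ≠ [] ∧ (∀ u ∈ us, UniformDepth (d + 1) u) ∧
      numLeavesList us = numLeavesList ts ∧ us.length ≤ ts.length ∧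
      tranList us * (10 * Real.exp x) ^ us.length ≤ tranList ts * (10 * x) ^ ts.length := by
  obtain ⟨m, hm, hxm, hmx⟩ : ∃ m : ℕ, 3 ≤ m ∧ 2 * x ≤ m ∧ m ≤ 3 * x := by
    refine ⟨⌊3 * x⌋₊, Nat.le_floor (by push_cast; linarith), ?_, Nat.floor_le (by linarith)⟩
    linarith [Nat.lt_floor_add_one (3 * x)]
  obtain ⟨us, hne', hdepth, hleaves, hlen, htran⟩ :=
    exists_forest_grouping (m := m) (by lia) hne hts
  have hlen_le : us.length ≤ ts.length := by
    have : us.length * m < (ts.length + 1) * m := by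
      rw [add_one_mul]
      exact hlen.trans_le (by gcongr; exact Nat.le_mul_of_pos_right _ (by lia))
    exact Nat.lt_succ_iff.1 (Nat.lt_of_mul_lt_mul_right this)
  refine ⟨us, hne', hdepth, hleaves, hlen_le, ?_⟩
  have htran : (tranList us : ℝ) * m ^ us.length ≤ tranList ts * m ^ ts.length := by
    exact_mod_cast htran
  refine le_of_mul_le_mul_right ?_ (show (0 : ℝ) < m ^ us.length by positivity)
  calc tranList us * (10 * Real.exp x) ^ us.length * (m : ℝ) ^ us.length
      = tranList us * m ^ us.length * (10 * Real.exp x) ^ us.length := by ring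
    _ ≤ tranList ts * m ^ ts.length * (10 * Real.exp x) ^ us.length := by gcongr
    _ = tranList ts * ((10 * Real.exp x) ^ us.length * m ^ ts.length) := by ring
    _ ≤ tranList ts * ((10 * x) ^ ts.length * m ^ us.length) := by
        gcongr tranList ts * ?_
        exact ten_mul_exp_pow_mul_pow_le hm hxm hmx hxn hlen.le
    _ = tranList ts * (10 * x) ^ ts.length * m ^ us.length := by ring

theorem exists_uniformDepth_tran_le {k d : ℕ} {ts : List PTree} (hne : ts ≠ [])
    (hts : ∀ t ∈ ts, UniformDepth d t) {x : ℝ} (hx : 1 ≤ x) (hlen : ts.length ≤ Real.exp^[k] x) :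
    ∃ T : PTree, T.UniformDepth (d + k + 1) ∧ T.numLeaves = numLeavesList ts ∧
      (T.tran : ℝ) ≤ tranList ts * (10 * x) ^ ts.length := by
  induction k generalizing d ts x with
  | zero =>
    have hlen : (ts.length : ℝ) ≤ x := hlen
    exact exists_uniformDepth_tran_le_of_length_le hne hts 0 (by linarith)
  | succ k ih =>
    rcases le_total (ts.length : ℝ) (10 * x) with hsmall | hlarge
    · exact exists_uniformDepth_tran_le_of_length_le hne hts (k + 1) hsmall
    · obtain ⟨us, hne', hdepth, hleaves, hle, htran⟩ :=
        exists_forest_grouping_ten_mul_exp hne hts hx hlarge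
      have hlen' : (us.length : ℝ) ≤ Real.exp^[k] (Real.exp x) :=
        (Nat.cast_le.2 hle).trans hlen
      obtain ⟨T, hT, hTleaves, hTtran⟩ :=
        ih hne' hdepth (Real.one_le_exp (by linarith)) hlen'
      refine ⟨T, ?_, hTleaves.trans hleaves, hTtran.trans htran⟩
      rwa [show d + (k + 1) + 1 = d + 1 + k + 1 by ring]

end PTree

theorem exists_nice_tree_general {k p : ℕ} (hp : 1 ≤ p) {x : ℝ} (hx : 1 ≤ x)
    (hpx : p ≤ Real.exp^[k] x) :
    ∃ T : PTree, T.UniformDepth (k + 1) ∧ T.numLeaves = p ∧ (T.tran : ℝ) ≤ (10 * x) ^ p := by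
  have hne : List.replicate p (PTree.node []) ≠ [] := by simpa using Nat.ne_of_gt hp
  have hleaf : ∀ t ∈ List.replicate p (PTree.node []), t.UniformDepth 0 :=
    fun t ht ↦ List.eq_of_mem_replicate ht ▸ .leaf
  simpa [PTree.numLeavesList_replicate_leaf, PTree.tranList_replicate_leaf] using
    PTree.exists_uniformDepth_tran_le hne hleaf hx (by simpa using hpx)

/-- For all `k ≥ 0` and `p ≥ 1` with `log^{(k)} p ≥ 1`, there is a
`(k,p)`-tree `T` (a rooted plane tree with exactly `p` leaves in which every root-to-leaf
path has exactly `k+1` edges) with `Tran(T) ≤ (10 · log^{(k)} p)^p`. -/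
theorem exists_nice_tree (k p : ℕ) (hp : 1 ≤ p) (hlog : 1 ≤ iterLog k p) :
    ∃ T : PTree, T.UniformDepth (k + 1) ∧ T.numLeaves = p ∧
      (T.tran : ℝ) ≤ (10 * iterLog k p) ^ p :=
  exists_nice_tree_general hp hlog (le_iterate_exp_iterLog k p)
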